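/- Let S be a Boolean inverse semigroup. Then the equivalence relation ≡ (defined on nonzero idempotents by e ≡ f iff e ≼ f and f ≼ e) is the universal relation on the set of nonzero idempotents of S if and only if S is 0-simplifying. -/

import Mathlib

namespace Paper

/-- An inverse semigroup with zero: an associative multiplication, a zero that is
absorbing, and a map `⁻¹` sending each element to its unique generalized inverse. -/
class IsInverseSemigroup (S : Type*) [Mul S] [Zero S] [Inv S] : Prop where
  mul_assoc : ∀ a b c : S, a * b * c = a * (b * c)
  mul_inv_mul : ∀ a : S, a * a⁻¹ * a = a
  inv_mul_inv : ∀ a : S, a⁻¹ * a * a⁻¹ = a⁻¹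
  inv_unique : ∀ a b : S, a * b * a = a → b * a * b = b → b = a⁻¹
  zero_mul : ∀ a : S, 0 * a = 0
  mul_zero : ∀ a : S, a * 0 = 0

variable {S : Type*} [Mul S] [Zero S] [Inv S]

/-- The natural partial order: `a ≤ b` iff `a = b * a⁻¹ * a`. -/
def nle (a b : S) : Prop := a = b * a⁻¹ * a

/-- `e` is an idempotent. -/
def idem (e : S) : Prop := e * e = e

/-- `a` and `b` are compatible. -/
def compat (a b : S) : Prop := idem (a⁻¹ * b) ∧ idem (a * b⁻¹)

/-- `a` and `b` are orthogonal. -/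
def orth (a b : S) : Prop := a⁻¹ * b = 0 ∧ a * b⁻¹ = 0

/-- `j` is the least upper bound of `a` and `b` for the natural partial order. -/
def isJoin (a b j : S) : Prop :=
  nle a j ∧ nle b j ∧ ∀ c : S, nle a c → nle b c → nle j c

/-- `m` is the greatest lower bound of `a` and `b` for the natural partial order. -/
def isMeet (a b m : S) : Prop :=
  nle m a ∧ nle m b ∧ ∀ c : S, nle c a → nle c b → nle c m

/-- `a` is an atom: a nonzero element with nothing strictly between it and `0`. -/
def isAtomElem (a : S) : Prop := a ≠ 0 ∧ ∀ x : S, nle x a → x = a ∨ x = 0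

/-- `s` is the least upper bound of the finite family `f`. -/
def isJoinFin {m : ℕ} (f : Fin m → S) (s : S) : Prop :=
  (∀ i, nle (f i) s) ∧ ∀ c : S, (∀ i, nle (f i) c) → nle s c

/-- A Boolean inverse semigroup: a nonzero inverse semigroup with zero in which
compatible pairs have joins, multiplication distributes over binary compatible joins,
and the idempotents form a generalized Boolean algebra under the natural partial
order (meets of idempotents are automatically given by multiplication; the extra
requirement is the existence of relative complements). -/
class IsBooleanInverseSemigroup (S : Type*) [Mul S] [Zero S] [Inv S]
    extends IsInverseSemigroup S : Prop where
  exists_ne_zero : ∃ a : S, a ≠ 0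
  compat_join : ∀ a b : S, compat a b → ∃ j, isJoin a b j
  mul_join : ∀ a b j c : S, isJoin a b j → isJoin (c * a) (c * b) (c * j)
  join_mul : ∀ a b j c : S, isJoin a b j → isJoin (a * c) (b * c) (j * c)
  relcomp : ∀ e f : S, idem e → idem f → nle f e →
    ∃ g : S, idem g ∧ nle g e ∧ g * f = 0 ∧ isJoin f g e


/-- An additive ideal: a nonempty two-sided semigroup ideal closed under binary
compatible joins. -/
def isAdditiveIdeal {S : Type*} [Mul S] [Inv S] (I : Set S) : Prop :=
  I.Nonempty ∧ (∀ a ∈ I, ∀ s : S, s * a ∈ I ∧ a * s ∈ I) ∧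
    (∀ a ∈ I, ∀ b ∈ I, compat a b → ∀ j : S, isJoin a b j → j ∈ I)

/-- `f ≼ e`: there is a pencil `x₁, …, xₘ` from `f` to `e`, i.e.
`f = ⋁ᵢ d(xᵢ)` and `r(xᵢ) ≤ e` for all `i`. -/
def pencilLe {S : Type*} [Mul S] [Inv S] (f e : S) : Prop :=
  ∃ (m : ℕ) (x : Fin (m + 1) → S),
    isJoinFin (fun i => (x i)⁻¹ * x i) f ∧ ∀ i, nle (x i * (x i)⁻¹) e

/-- `S` is `0`-simplifying: it is nonzero and its only additive ideals are `{0}`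
and `S`. -/
def isZeroSimplifying (S : Type*) [Mul S] [Zero S] [Inv S] : Prop :=
  (∃ a : S, a ≠ 0) ∧
    ∀ I : Set S, isAdditiveIdeal I → I = {(0 : S)} ∨ I = Set.univ

/-- `S` is fundamental: every element commuting with all idempotents is idempotent. -/
def isFundamental (S : Type*) [Mul S] : Prop :=
  ∀ a : S, (∀ e : S, idem e → a * e = e * a) → idem a

/-- A morphism (additive homomorphism) of Boolean inverse semigroups: a semigroup
homomorphism preserving `0` and binary compatible joins. -/
def isMorphism {S : Type*} {T : Type*} [Mul S] [Zero S] [Inv S]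
    [Mul T] [Zero T] [Inv T] (θ : S → T) : Prop :=
  (∀ a b : S, θ (a * b) = θ a * θ b) ∧ θ 0 = 0 ∧
    ∀ a b j : S, compat a b → isJoin a b j → isJoin (θ a) (θ b) (θ j)

/-!
For idempotents, `f ≼ e` says exactly that `f` belongs to every additive ideal containing `e`.
If `f = ⋁ d(xᵢ)` with `r(xᵢ) ≤ e`, then `xᵢ = e xᵢ`, so an additive ideal containing `e` contains
every `d(xᵢ)` and hence `f`. Conversely `{a | d(a) ≼ e}` is an additive ideal containing `e`.
Since an additive ideal contains `a` if and only if it contains `d(a)`, the relation `≼` is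
universal on nonzero idempotents exactly when every nonzero additive ideal is everything.
-/

section InverseSemigroup

open IsInverseSemigroup (mul_inv_mul inv_mul_inv)

variable [IsInverseSemigroup S]

/-- The Mathlib structure underlying an inverse semigroup with zero. It is a local instance only,
since `Mul S` and `Zero S` are themselves arguments of `IsInverseSemigroup`. -/
abbrev semigroupWithZero : SemigroupWithZero S where
  mul_assoc := IsInverseSemigroup.mul_assoc
  zero_mul := IsInverseSemigroup.zero_mul
  mul_zero := IsInverseSemigroup.mul_zero

attribute [local instance] semigroupWithZero

theorem inv_inv (a : S) : a⁻¹⁻¹ = a :=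
  (IsInverseSemigroup.inv_unique a⁻¹ a (inv_mul_inv a) (mul_inv_mul a)).symm

theorem idem.inv_eq {e : S} (he : idem e) : e⁻¹ = e := by
  have hee : e * e * e = e := by rw [he, he]
  exact (IsInverseSemigroup.inv_unique e e hee hee).symm

theorem idem.mul_mul_cancel {e : S} (he : idem e) (a : S) : e * (e * a) = e * a := by
  rw [← mul_assoc, he]

theorem idem_inv_mul_self (a : S) : idem (a⁻¹ * a) := by
  rw [idem, ← mul_assoc, inv_mul_inv]

theorem idem_mul_inv_self (a : S) : idem (a * a⁻¹) := by
  rw [idem, ← mul_assoc, mul_inv_mul]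

theorem mul_inv_mul_self (a : S) : a * (a⁻¹ * a) = a := by
  rw [← mul_assoc, mul_inv_mul]

theorem inv_mul_self_ne_zero {a : S} (ha : a ≠ 0) : a⁻¹ * a ≠ 0 := fun h =>
  ha (by rw [← mul_inv_mul_self a, h, mul_zero])

theorem idem.inv_mul_self {e : S} (he : idem e) : e⁻¹ * e = e := by
  rw [he.inv_eq, he]

theorem idem.mul {e f : S} (he : idem e) (hf : idem f) : idem (e * f) := by
  set x := (e * f)⁻¹ with hx
  have mul_x_mul : e * (f * (x * (e * f))) = e * f := by
    simpa only [mul_assoc] using mul_inv_mul (e * f)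
  have x_mul_x (a : S) : x * (e * (f * (x * a))) = x * a := by
    simpa only [mul_assoc] using congrArg (· * a) (inv_mul_inv (e * f))
  have x_eq : f * x * e = x := by
    refine IsInverseSemigroup.inv_unique _ _ ?_ ?_
    · simp only [mul_assoc, he.mul_mul_cancel, hf.mul_mul_cancel, mul_x_mul]
    · simp only [mul_assoc, he.mul_mul_cancel, hf.mul_mul_cancel, x_mul_x]
  have idem_x : idem x := calc
    x * x = f * (x * (e * (f * (x * e)))) := by
      conv_lhs => rw [← x_eq]
      simp only [mul_assoc]
    _ = x := by rw [x_mul_x, ← mul_assoc, x_eq]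
  have mul_eq : e * f = x := by rw [← inv_inv (e * f), ← hx, idem_x.inv_eq]
  rwa [mul_eq]

theorem idem.mul_comm {e f : S} (he : idem e) (hf : idem f) : e * f = f * e := by
  have hef := he.mul hf
  have hfe := hf.mul he
  have inv_eq : f * e = (e * f)⁻¹ := by
    rw [idem] at hef hfe
    simp only [mul_assoc] at hef hfe
    refine IsInverseSemigroup.inv_unique _ _ ?_ ?_
    · simp only [mul_assoc, he.mul_mul_cancel, hf.mul_mul_cancel, hef]
    · simp only [mul_assoc, he.mul_mul_cancel, hf.mul_mul_cancel, hfe]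
  rw [inv_eq, hef.inv_eq]

theorem mul_inv_rev (a b : S) : (a * b)⁻¹ = b⁻¹ * a⁻¹ := by
  have comm := (idem_mul_inv_self b).mul_comm (idem_inv_mul_self a)
  refine (IsInverseSemigroup.inv_unique _ _ ?_ ?_).symm
  · calc a * b * (b⁻¹ * a⁻¹) * (a * b)
        = a * ((b * b⁻¹) * (a⁻¹ * a)) * b := by simp only [mul_assoc]
      _ = (a * a⁻¹ * a) * (b * b⁻¹ * b) := by rw [comm]; simp only [mul_assoc]
      _ = a * b := by rw [mul_inv_mul, mul_inv_mul]
  · calc b⁻¹ * a⁻¹ * (a * b) * (b⁻¹ * a⁻¹)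
        = b⁻¹ * ((a⁻¹ * a) * (b * b⁻¹)) * a⁻¹ := by simp only [mul_assoc]
      _ = (b⁻¹ * b * b⁻¹) * (a⁻¹ * a * a⁻¹) := by rw [← comm]; simp only [mul_assoc]
      _ = b⁻¹ * a⁻¹ := by rw [inv_mul_inv, inv_mul_inv]

theorem inv_mul_self_mul_eq_conj (a s : S) : (a * s)⁻¹ * (a * s) = s⁻¹ * (a⁻¹ * a) * s := by
  rw [mul_inv_rev]
  simp only [mul_assoc]

theorem idem.compat {e f : S} (he : idem e) (hf : idem f) : compat e f := by
  rw [Paper.compat, he.inv_eq, hf.inv_eq]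
  exact ⟨he.mul hf, he.mul hf⟩

theorem nle_iff {a b : S} : nle a b ↔ b * (a⁻¹ * a) = a := by
  rw [nle, mul_assoc, eq_comm]

theorem idem.nle_iff {e b : S} (he : idem e) : nle e b ↔ b * e = e := by
  rw [Paper.nle_iff, he.inv_mul_self]

theorem idem.mul_nle {e : S} (he : idem e) (b : S) : nle (b * e) b := by
  have absorb : e * ((b * e)⁻¹ * (b * e)) = (b * e)⁻¹ * (b * e) := by
    rw [he.mul_comm (idem_inv_mul_self _), mul_assoc, mul_assoc, he]
  rw [Paper.nle_iff, ← absorb, ← mul_assoc, mul_inv_mul_self]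

theorem nle.refl (a : S) : nle a a :=
  Paper.nle_iff.2 (mul_inv_mul_self a)

theorem nle.trans {a b c : S} (hab : nle a b) (hbc : nle b c) : nle a c := by
  have factor : c * (b⁻¹ * b * (a⁻¹ * a)) = a := by
    rw [← mul_assoc, nle_iff.1 hbc, nle_iff.1 hab]
  rw [← factor]
  exact ((idem_inv_mul_self b).mul (idem_inv_mul_self a)).mul_nle c

theorem nle.antisymm {a b : S} (hab : nle a b) (hba : nle b a) : a = b := by
  rw [nle_iff] at hab hba
  calc a = b * (a⁻¹ * a) := hab.symm
    _ = a * ((b⁻¹ * b) * (a⁻¹ * a)) := by rw [← mul_assoc a, hba]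
    _ = a * (a⁻¹ * a) * (b⁻¹ * b) := by
      rw [(idem_inv_mul_self b).mul_comm (idem_inv_mul_self a), ← mul_assoc]
    _ = b := by rw [mul_inv_mul_self, hba]

theorem mul_inv_self_nle_iff {x e : S} : nle (x * x⁻¹) e ↔ e * x = x := by
  rw [(idem_mul_inv_self x).nle_iff]
  refine ⟨fun h => ?_, fun h => by rw [← mul_assoc, h]⟩
  calc e * x = e * (x * x⁻¹) * x := by rw [mul_assoc, mul_inv_mul]
    _ = x := by rw [h, mul_inv_mul]

theorem inv_mul_self_mul_nle (s a : S) : nle ((s * a)⁻¹ * (s * a)) (a⁻¹ * a) := by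
  rw [(idem_inv_mul_self _).nle_iff, (idem_inv_mul_self a).mul_comm (idem_inv_mul_self _)]
  simp only [mul_assoc, mul_inv_mul_self]

theorem nle.inv_mul_eq {a b : S} (hab : nle a b) : b⁻¹ * a = a⁻¹ * a := by
  have ha := idem_inv_mul_self a
  calc b⁻¹ * a = b⁻¹ * b * (a⁻¹ * a) := by rw [mul_assoc, nle_iff.1 hab]
    _ = (a⁻¹ * a) * (b⁻¹ * b) * (a⁻¹ * a) := by
      rw [ha.mul_comm (idem_inv_mul_self b), mul_assoc _ (a⁻¹ * a), ha]
    _ = (b * (a⁻¹ * a))⁻¹ * (b * (a⁻¹ * a)) := by rw [inv_mul_self_mul_eq_conj, ha.inv_eq]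
    _ = a⁻¹ * a := by rw [nle_iff.1 hab]

theorem isJoin.unique {a b j k : S} (hj : isJoin a b j) (hk : isJoin a b k) : j = k :=
  (hj.2.2 k hk.1 hk.2.1).antisymm (hk.2.2 j hj.1 hj.2.1)

theorem isJoinFin.unique {m : ℕ} {g : Fin m → S} {j k : S} (hj : isJoinFin g j)
    (hk : isJoinFin g k) : j = k :=
  (hj.2 k hk.1).antisymm (hk.2 j hj.1)

theorem isJoinFin_fin_one (g : Fin 1 → S) : isJoinFin g (g 0) :=
  ⟨Fin.forall_fin_one.2 (nle.refl _), fun _ hc => hc 0⟩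

theorem isJoin.isJoinFin_fin_add {m n : ℕ} {g : Fin (m + n) → S} {a b j : S}
    (hj : isJoin a b j) (ha : isJoinFin (fun i => g (Fin.castAdd n i)) a)
    (hb : isJoinFin (fun i => g (Fin.natAdd m i)) b) : isJoinFin g j :=
  ⟨(Fin.forall_fin_add _).2 ⟨fun i => (ha.1 i).trans hj.1, fun i => (hb.1 i).trans hj.2.1⟩,
    fun c hc => hj.2.2 c (ha.2 c fun _ => hc _) (hb.2 c fun _ => hc _)⟩

theorem pencilLe_inv_mul_self {x e : S} (hx : e * x = x) : pencilLe (x⁻¹ * x) e :=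
  ⟨0, fun _ => x, isJoinFin_fin_one _, fun _ => mul_inv_self_nle_iff.2 hx⟩

theorem idem.pencilLe_self {e : S} (he : idem e) : pencilLe e e := by
  simpa only [he.inv_mul_self] using pencilLe_inv_mul_self he

theorem pencilLe.join {e f g h : S} (hf : pencilLe f e) (hg : pencilLe g e)
    (hh : isJoin f g h) : pencilLe h e := by
  obtain ⟨m, x, hxf, hxe⟩ := hf
  obtain ⟨n, y, hyg, hye⟩ := hg
  refine ⟨m + 1 + n, (Fin.append x y : Fin ((m + 1) + (n + 1)) → S),
    hh.isJoinFin_fin_add (m := m + 1) (n := n + 1) ?_ ?_,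
    (Fin.forall_fin_add (m := m + 1) (n := n + 1) _).2 ⟨?_, ?_⟩⟩
  · simpa only [Fin.append_left] using hxf
  · simpa only [Fin.append_right] using hyg
  · simpa only [Fin.append_left] using hxe
  · simpa only [Fin.append_right] using hye

/-- The elements `a` with `d(a) ≼ e`; for idempotent `e`, the additive ideal generated by `e`. -/
def pencilIdeal {S : Type*} [Mul S] [Inv S] (e : S) : Set S := {a | pencilLe (a⁻¹ * a) e}

theorem mem_pencilIdeal {S : Type*} [Mul S] [Inv S] {a e : S} :
    a ∈ pencilIdeal e ↔ pencilLe (a⁻¹ * a) e :=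
  Iff.rfl

theorem idem.mem_pencilIdeal_iff {e f : S} (hf : idem f) : f ∈ pencilIdeal e ↔ pencilLe f e := by
  rw [mem_pencilIdeal, hf.inv_mul_self]

namespace isAdditiveIdeal

variable {I : Set S}

theorem zero_mem (hI : isAdditiveIdeal I) : (0 : S) ∈ I := by
  obtain ⟨a, ha⟩ := hI.1
  simpa only [zero_mul] using (hI.2.1 a ha 0).1

theorem inv_mul_self_mem_iff (hI : isAdditiveIdeal I) {a : S} : a⁻¹ * a ∈ I ↔ a ∈ I := by
  refine ⟨fun ha => ?_, fun ha => (hI.2.1 a ha a⁻¹).1⟩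
  simpa only [mul_inv_mul_self] using (hI.2.1 _ ha a).1

end isAdditiveIdeal

end InverseSemigroup

/-- A distributive inverse semigroup: compatible pairs have joins, and multiplication distributes
over binary joins. The distributive laws range over all pairs with a join, which is the same as
the compatible pairs: two elements with a common upper bound are compatible. -/
class IsDistributiveInverseSemigroup (S : Type*) [Mul S] [Zero S] [Inv S] : Prop
    extends IsInverseSemigroup S where
  compat_join : ∀ a b : S, compat a b → ∃ j, isJoin a b j
  mul_join : ∀ a b j c : S, isJoin a b j → isJoin (c * a) (c * b) (c * j)
  join_mul : ∀ a b j c : S, isJoin a b j → isJoin (a * c) (b * c) (j * c)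

instance IsBooleanInverseSemigroup.isDistributiveInverseSemigroup [IsBooleanInverseSemigroup S] :
    IsDistributiveInverseSemigroup S where
  compat_join := compat_join
  mul_join := mul_join
  join_mul := join_mul

section DistributiveInverseSemigroup

open IsDistributiveInverseSemigroup

variable [IsDistributiveInverseSemigroup S]

attribute [local instance] semigroupWithZero

theorem isJoin.inv_mul_self {a b j : S} (hj : isJoin a b j) :
    isJoin (a⁻¹ * a) (b⁻¹ * b) (j⁻¹ * j) := by
  simpa only [hj.1.inv_mul_eq, hj.2.1.inv_mul_eq] using mul_join a b j j⁻¹ hj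

theorem isJoin.idem {a b j : S} (hj : isJoin a b j) (ha : idem a) (hb : idem b) : idem j := by
  have join_self : isJoin a b (j⁻¹ * j) := by
    simpa only [ha.inv_mul_self, hb.inv_mul_self] using hj.inv_mul_self
  rw [hj.unique join_self]
  exact idem_inv_mul_self j

theorem isJoinFin.induction_of_idem {P : S → Prop}
    (join : ∀ e f j, Paper.idem e → Paper.idem f → isJoin e f j → P e → P f → P j)
    {m : ℕ} {g : Fin (m + 1) → S} (hg : ∀ i, Paper.idem (g i)) (mem : ∀ i, P (g i)) {j : S}
    (hj : isJoinFin g j) : P j := by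
  suffices h : ∃ k, Paper.idem k ∧ P k ∧ isJoinFin g k by
    obtain ⟨k, -, hPk, hk⟩ := h
    rwa [hj.unique hk]
  clear hj
  induction m with
  | zero => exact ⟨g 0, hg 0, mem 0, isJoinFin_fin_one g⟩
  | succ m ih =>
    obtain ⟨k, idem_k, hPk, hk⟩ := ih (fun i => hg i.castSucc) fun i => mem i.castSucc
    obtain ⟨l, hl⟩ := compat_join _ _ (idem_k.compat (hg (Fin.last _)))
    exact ⟨l, hl.idem idem_k (hg _), join _ _ _ idem_k (hg _) hl hPk (mem _),
      hl.isJoinFin_fin_add hk (isJoinFin_fin_one _)⟩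

theorem isAdditiveIdeal.mem_of_pencilLe {I : Set S} (hI : isAdditiveIdeal I) {e f : S}
    (he : e ∈ I) (hfe : pencilLe f e) : f ∈ I := by
  obtain ⟨m, x, hxf, hxe⟩ := hfe
  refine hxf.induction_of_idem (P := (· ∈ I)) ?_ (fun i => idem_inv_mul_self (x i)) fun i => ?_
  · exact fun a b j ha hb hj haI hbI => hI.2.2 a haI b hbI (ha.compat hb) j hj
  · have hxI : x i ∈ I := mul_inv_self_nle_iff.1 (hxe i) ▸ (hI.2.1 e he (x i)).2
    exact hI.inv_mul_self_mem_iff.2 hxI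

theorem pencilLe.conj {e f : S} (hfe : pencilLe f e) (s : S) : pencilLe (s⁻¹ * f * s) e := by
  obtain ⟨m, x, hxf, hxe⟩ := hfe
  refine hxf.induction_of_idem (P := fun j => pencilLe (s⁻¹ * j * s) e) ?_
    (fun i => idem_inv_mul_self (x i)) fun i => ?_
  · exact fun a b j _ _ hj ha hb => ha.join hb (join_mul _ _ _ s (mul_join _ _ _ s⁻¹ hj))
  · rw [← inv_mul_self_mul_eq_conj]
    exact pencilLe_inv_mul_self (by rw [← mul_assoc, mul_inv_self_nle_iff.1 (hxe i)])

theorem pencilLe.of_nle {e f g : S} (hfe : pencilLe f e) (hg : idem g) (hgf : nle g f) :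
    pencilLe g e := by
  simpa only [mul_assoc, hg.nle_iff.1 hgf, hg.inv_mul_self] using hfe.conj g

theorem isAdditiveIdeal_pencilIdeal (e : S) : isAdditiveIdeal (pencilIdeal e) := by
  refine ⟨⟨0, pencilLe_inv_mul_self (mul_zero e)⟩, fun a ha s => ⟨?_, ?_⟩, ?_⟩
  · exact pencilLe.of_nle ha (idem_inv_mul_self _) (inv_mul_self_mul_nle s a)
  · rw [mem_pencilIdeal, inv_mul_self_mul_eq_conj]
    exact pencilLe.conj ha s
  · exact fun a ha b hb _ j hj => pencilLe.join ha hb hj.inv_mul_self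

theorem pencilLe_iff_forall_isAdditiveIdeal {e f : S} (he : idem e) (hf : idem f) :
    pencilLe f e ↔ ∀ I : Set S, isAdditiveIdeal I → e ∈ I → f ∈ I :=
  ⟨fun hfe _ hI heI => hI.mem_of_pencilLe heI hfe, fun h => hf.mem_pencilIdeal_iff.1 <|
    h _ (isAdditiveIdeal_pencilIdeal e) (he.mem_pencilIdeal_iff.2 he.pencilLe_self)⟩

end DistributiveInverseSemigroup

theorem equiv_universal_iff_zeroSimplifying_general (S : Type*) [Mul S] [Zero S] [Inv S]
    [IsDistributiveInverseSemigroup S] (exists_ne_zero : ∃ a : S, a ≠ 0) :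
    (∀ e f : S, idem e → idem f → e ≠ 0 → f ≠ 0 → pencilLe e f ∧ pencilLe f e) ↔
      isZeroSimplifying S := by
  constructor
  · refine fun h => ⟨exists_ne_zero, fun I hI => or_iff_not_imp_left.2 fun hI0 => ?_⟩
    obtain ⟨a, haI, ha⟩ : ∃ a ∈ I, a ≠ 0 := by
      by_contra! h0
      exact hI0 (Set.eq_singleton_iff_nonempty_unique_mem.2 ⟨hI.1, h0⟩)
    refine Set.eq_univ_of_forall fun s => ?_
    obtain rfl | hs := eq_or_ne s 0
    · exact hI.zero_mem
    have hsa : pencilLe (s⁻¹ * s) (a⁻¹ * a) := (h _ _ (idem_inv_mul_self s) (idem_inv_mul_self a)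
      (inv_mul_self_ne_zero hs) (inv_mul_self_ne_zero ha)).1
    exact hI.inv_mul_self_mem_iff.1 (hI.mem_of_pencilLe (hI.inv_mul_self_mem_iff.2 haI) hsa)
  · rintro ⟨-, hS⟩
    have pencilLe_of_ne_zero {e f : S} (he : idem e) (hf : idem f) (he0 : e ≠ 0) :
        pencilLe f e := by
      refine (pencilLe_iff_forall_isAdditiveIdeal he hf).2 fun I hI heI => ?_
      obtain rfl | rfl := hS I hI
      · exact absurd heI he0
      · exact Set.mem_univ f
    exact fun e f he hf he0 hf0 =>
      ⟨pencilLe_of_ne_zero hf he hf0, pencilLe_of_ne_zero he hf he0⟩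

/-- The relation `≡` (mutual `≼`) is the universal relation on nonzero idempotents
iff `S` is `0`-simplifying. -/
theorem equiv_universal_iff_zeroSimplifying (S : Type*) [Mul S] [Zero S] [Inv S]
    [IsBooleanInverseSemigroup S] :
    (∀ e f : S, idem e → idem f → e ≠ 0 → f ≠ 0 → pencilLe e f ∧ pencilLe f e) ↔
      isZeroSimplifying S :=
  equiv_universal_iff_zeroSimplifying_general S IsBooleanInverseSemigroup.exists_ne_zero

end Paper
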